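/- arXiv:2103.16691 — 2 statements merged into one kernel-verified Lean document; each statement's English description precedes it below -/
import Mathlib

section
/- The element δ³, where δ = yx − ω·xy, is central in the binary cubic generic Clifford algebra A. -/
noncomputable section

open FreeAlgebra

variable (k : Type*) [Field k]

/-- Relations of the binary cubic generic Clifford algebra. -/
inductive GCRel : FreeAlgebra k (Fin 2) → FreeAlgebra k (Fin 2) → Prop
  | rel1 : GCRel ((ι k 0) ^ 3 * ι k 1) (ι k 1 * (ι k 0) ^ 3)
  | rel2 : GCRel (ι k 0 * (ι k 1) ^ 3) ((ι k 1) ^ 3 * ι k 0)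
  | rel3 : GCRel ((ι k 0) ^ 2 * (ι k 1) ^ 2 + (ι k 0 * ι k 1) ^ 2)
      ((ι k 1) ^ 2 * (ι k 0) ^ 2 + (ι k 1 * ι k 0) ^ 2)

/-- The binary cubic generic Clifford algebra. -/
abbrev GCA := RingQuot (GCRel k)

/-- The generator x. -/
def gx : GCA k := RingQuot.mkAlgHom k (GCRel k) (ι k 0)

/-- The generator y. -/
def gy : GCA k := RingQuot.mkAlgHom k (GCRel k) (ι k 1)

/-- α = x²y + xyx + yx². -/
def gα : GCA k := gx k ^ 2 * gy k + gx k * gy k * gx k + gy k * gx k ^ 2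

/-- β = xy² + yxy + y²x. -/
def gβ : GCA k := gx k * gy k ^ 2 + gy k * gx k * gy k + gy k ^ 2 * gx k

/-- γ = (xy)² − y²x². -/
def gγ : GCA k := (gx k * gy k) ^ 2 - gy k ^ 2 * gx k ^ 2

/-- δ = yx − ω·xy. -/
def gδ (ω : k) : GCA k := gy k * gx k - algebraMap k (GCA k) ω * (gx k * gy k)

end

/-!
Since `(yx - ωxy)x - ω²x(yx - ωxy) = x²y + xyx + yx²` whenever `ω² + ω + 1 = 0`, the nested
`q`-commutators of `δ` with the generators are `α` and, up to the factor `-ω`, `β`. The relations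
say exactly that `α`, `β` and the cubes of the generators are central. Hence `δx = ω²xδ + α` with
`α` central, and by the `q`-Leibniz rule `δ³x = ω⁶xδ³ + (1 + ω² + ω⁴)αδ² = xδ³`; likewise for `y`.
-/

section QCommutator

variable {k R : Type*} [CommRing k] [Ring R] [Algebra k R]

/-- The `q`-commutator `[a, b]_q = ab - q·ba`. The element `δ` is a `q`-commutator of the generators
of the generic Clifford algebra, and its `q`-commutator with each of them, for `q` a suitable power
of `ω`, is central. -/
def qCommutator (q : k) (a b : R) : R :=
  a * b - q • (b * a)

theorem commute_iff_qCommutator_one_eq_zero {a b : R} :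
    Commute a b ↔ qCommutator (1 : k) a b = 0 := by
  rw [qCommutator, one_smul, sub_eq_zero, commute_iff_eq]

theorem commute_qCommutator_right {q : k} {a b c : R} (ha : Commute c a) (hb : Commute c b) :
    Commute c (qCommutator q a b) :=
  (ha.mul_right hb).sub_right ((hb.mul_right ha).smul_right q)

theorem qCommutator_mul_left (p q : k) (a b x : R) :
    qCommutator (p * q) (a * b) x = a * qCommutator p b x + p • (qCommutator q a x * b) := by
  simp only [qCommutator, mul_sub, sub_mul, mul_smul_comm, smul_mul_assoc, smul_sub, smul_smul,
    mul_assoc]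
  abel

theorem qCommutator_pow_succ_left {q : k} {a x : R} (h : Commute a (qCommutator q a x)) (n : ℕ) :
    qCommutator (q ^ (n + 1)) (a ^ (n + 1)) x =
      (∑ i ∈ Finset.range (n + 1), q ^ i) • (a ^ n * qCommutator q a x) := by
  induction n with
  | zero => simp
  | succ n ih =>
    rw [pow_succ q, pow_succ' a, qCommutator_mul_left, ih, (h.symm.pow_right (n + 1)).eq,
      mul_smul_comm, ← mul_assoc, ← pow_succ', Finset.sum_range_succ _ (n + 1), add_smul]

theorem commute_pow_left_of_geom_sum_eq_zero {q : k} {n : ℕ} {a x : R}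
    (h : Commute a (qCommutator q a x)) (hq : ∑ i ∈ Finset.range n, q ^ i = 0) :
    Commute (a ^ n) x := by
  cases n with
  | zero => simp
  | succ n =>
    have hq_pow : q ^ (n + 1) = 1 := by
      rw [← sub_eq_zero, ← geom_sum_mul, hq, zero_mul]
    rw [commute_iff_qCommutator_one_eq_zero (k := k), ← hq_pow, qCommutator_pow_succ_left h, hq,
      zero_smul]

end QCommutator

section CubicPolarization

variable {R : Type*} [Ring R]

/-- The polarization `x²y + xyx + yx²` of the cube: the coefficient of `t` in `(x + ty)³`. The
elements `α` and `β` of the generic Clifford algebra are its values at `(x, y)` and `(y, x)`. -/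
def cubicPolarization (x y : R) : R :=
  x ^ 2 * y + x * y * x + y * x ^ 2

theorem commute_left_cubicPolarization {x y : R} (h : x ^ 3 * y = y * x ^ 3) :
    Commute x (cubicPolarization x y) := by
  have telescope : x * cubicPolarization x y - cubicPolarization x y * x =
      x ^ 3 * y - y * x ^ 3 := by
    rw [cubicPolarization]
    noncomm_ring
  rw [commute_iff_eq, ← sub_eq_zero, telescope, h, sub_self]

theorem commute_right_cubicPolarization {x y : R}
    (h : x ^ 2 * y ^ 2 + (x * y) ^ 2 = y ^ 2 * x ^ 2 + (y * x) ^ 2) :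
    Commute y (cubicPolarization x y) := by
  have telescope : y * cubicPolarization x y - cubicPolarization x y * y =
      (y ^ 2 * x ^ 2 + (y * x) ^ 2) - (x ^ 2 * y ^ 2 + (x * y) ^ 2) := by
    rw [cubicPolarization]
    noncomm_ring
  rw [commute_iff_eq, ← sub_eq_zero, telescope, h, sub_self]

variable {k : Type*} [CommRing k] [Algebra k R] {ω : k}

theorem qCommutator_qCommutator_right (hω : ω ^ 2 + ω + 1 = 0) (x y : R) :
    qCommutator (ω ^ 2) (qCommutator ω y x) x = cubicPolarization x y := by
  have hω_sq : ω ^ 2 = -1 - ω := by linear_combination hω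
  have hω_cube : ω ^ 2 * ω = 1 := by linear_combination (ω - 1) * hω
  simp only [qCommutator, cubicPolarization, mul_sub, sub_mul, mul_smul_comm, smul_mul_assoc,
    smul_sub, smul_smul, hω_cube, pow_two x, mul_assoc]
  rw [hω_sq]
  module

theorem qCommutator_qCommutator_left (hω : ω ^ 2 + ω + 1 = 0) (x y : R) :
    qCommutator ω (qCommutator ω y x) y = -ω • cubicPolarization y x := by
  have hω_sq : ω * ω = -1 - ω := by linear_combination hω
  simp only [qCommutator, cubicPolarization, mul_sub, sub_mul, mul_smul_comm, smul_mul_assoc,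
    smul_sub, smul_smul, hω_sq, pow_two y, mul_assoc]
  module

end CubicPolarization

section CubicRelations

variable {k R : Type*} [CommRing k] [Ring R] [Algebra k R] {ω : k} {x y : R}

theorem commute_qCommutator_pow_three_right (hω : ω ^ 2 + ω + 1 = 0) (hx : x ^ 3 * y = y * x ^ 3)
    (hxy : x ^ 2 * y ^ 2 + (x * y) ^ 2 = y ^ 2 * x ^ 2 + (y * x) ^ 2) :
    Commute (qCommutator ω y x ^ 3) x := by
  have hcomm : Commute (cubicPolarization x y) (qCommutator ω y x) :=
    commute_qCommutator_right (commute_right_cubicPolarization hxy).symm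
      (commute_left_cubicPolarization hx).symm
  refine commute_pow_left_of_geom_sum_eq_zero (q := ω ^ 2) ?_ ?_
  · rw [qCommutator_qCommutator_right hω]
    exact hcomm.symm
  · simp only [Finset.sum_range_succ, Finset.sum_range_zero]
    linear_combination (ω ^ 2 - ω + 1) * hω

theorem commute_qCommutator_pow_three_left (hω : ω ^ 2 + ω + 1 = 0) (hy : y ^ 3 * x = x * y ^ 3)
    (hxy : x ^ 2 * y ^ 2 + (x * y) ^ 2 = y ^ 2 * x ^ 2 + (y * x) ^ 2) :
    Commute (qCommutator ω y x ^ 3) y := by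
  have hcomm : Commute (cubicPolarization y x) (qCommutator ω y x) :=
    commute_qCommutator_right (commute_left_cubicPolarization hy).symm
      (commute_right_cubicPolarization hxy.symm).symm
  refine commute_pow_left_of_geom_sum_eq_zero (q := ω) ?_ ?_
  · rw [qCommutator_qCommutator_left hω]
    exact hcomm.symm.smul_right (-ω)
  · simp only [Finset.sum_range_succ, Finset.sum_range_zero]
    linear_combination hω

end CubicRelations

section GenericCliffordAlgebra

variable {k : Type*} [Field k]

theorem gx_pow_three_mul_gy : gx k ^ 3 * gy k = gy k * gx k ^ 3 := by
  simpa only [gx, gy, map_mul, map_pow] using RingQuot.mkAlgHom_rel k (GCRel.rel1 (k := k))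

theorem gy_pow_three_mul_gx : gy k ^ 3 * gx k = gx k * gy k ^ 3 := by
  simpa only [gx, gy, map_mul, map_pow] using (RingQuot.mkAlgHom_rel k (GCRel.rel2 (k := k))).symm

theorem gx_sq_mul_gy_sq_add : gx k ^ 2 * gy k ^ 2 + (gx k * gy k) ^ 2 =
    gy k ^ 2 * gx k ^ 2 + (gy k * gx k) ^ 2 := by
  simpa only [gx, gy, map_mul, map_pow, map_add] using RingQuot.mkAlgHom_rel k (GCRel.rel3 (k := k))

theorem gδ_eq_qCommutator (ω : k) : gδ k ω = qCommutator ω (gy k) (gx k) := by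
  rw [gδ, qCommutator, Algebra.smul_def]

theorem adjoin_gx_gy : Algebra.adjoin k {gx k, gy k} = ⊤ := by
  have image_ι : RingQuot.mkAlgHom k (GCRel k) '' Set.range (FreeAlgebra.ι k) = {gx k, gy k} := by
    simp [Set.ext_iff, gx, gy, eq_comm]
  rw [← image_ι, ← AlgHom.map_adjoin, FreeAlgebra.adjoin_range_ι, Algebra.map_top,
    AlgHom.range_eq_top]
  exact RingQuot.mkAlgHom_surjective k (GCRel k)

theorem mem_center_of_commute_gx_gy {z : GCA k} (hx : Commute z (gx k)) (hy : Commute z (gy k)) :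
    z ∈ Set.center (GCA k) := by
  have adjoin_le : Algebra.adjoin k {gx k, gy k} ≤ Subalgebra.centralizer k {z} := by
    simp only [Algebra.adjoin_le_iff, Set.pair_subset_iff, SetLike.mem_coe,
      Subalgebra.mem_centralizer_iff, Set.mem_singleton_iff, forall_eq]
    exact ⟨hx, hy⟩
  rw [Semigroup.mem_center_iff]
  intro g
  have hg : g ∈ Algebra.adjoin k {gx k, gy k} := by
    rw [adjoin_gx_gy]
    exact Algebra.mem_top
  exact (Subalgebra.mem_centralizer_iff k |>.mp (adjoin_le hg) z rfl).symm

end GenericCliffordAlgebra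

theorem stmt2_general (k : Type*) [Field k] (ω : k) (hω : ω ^ 2 + ω + 1 = 0) :
    gδ k ω ^ 3 ∈ Set.center (GCA k) := by
  rw [gδ_eq_qCommutator]
  exact mem_center_of_commute_gx_gy
    (commute_qCommutator_pow_three_right hω gx_pow_three_mul_gy gx_sq_mul_gy_sq_add)
    (commute_qCommutator_pow_three_left hω gy_pow_three_mul_gx gx_sq_mul_gy_sq_add)

theorem stmt2 (k : Type*) [Field k] (h2 : (2 : k) ≠ 0) (h3 : (3 : k) ≠ 0)
    (ω : k) (hω : IsPrimitiveRoot ω 3) :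
    gδ k ω ^ 3 ∈ Set.center (GCA k) := by
  exact stmt2_general k ω <| by
    simpa [Polynomial.cyclotomic_three] using hω.isRoot_cyclotomic three_pos
end

section
/- The center of the binary cubic generic Clifford algebra A is exactly the k-subalgebra generated by the six elements x³, y³, α, β, γ, and δ³. -/
/-!
Adjoin `δ = yx - ω xy` to the generators. Over `k[α, β]` the relations say that `x, δ, y` commute
pairwise up to powers of `ω` and terms of lower degree, where `δ` counts in degree one, and the
regular representation shows that the monomials `xⁱ δʲ yˡ` form a basis. Comparing leading terms in
`y z = z y` and `δ z = z δ` forces `i ≡ j ≡ l` modulo `3` for the top-degree exponents of a central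
`z`. Since `γ` has leading term `(1 - ω) x δ y`, a monomial with such exponents agrees, up to a unit
and lower terms, with a product of `x³, y³, δ³, γ`; subtract these products and induct on the
degree.
-/

section FilteredBasis

open Submodule

variable {R M N ι : Type*} [CommRing R] [AddCommGroup M] [Module R M] [AddCommGroup N] [Module R N]

/-- The filtration of a module induced by a family `b` graded by `deg`: the `n`-th step is spanned
by the members of degree strictly below `n`, so that the zeroth step is `⊥`. -/
def spanDegLT (R : Type*) [CommRing R] [Module R M] (b : ι → M) (deg : ι → ℕ) (n : ℕ) :
    Submodule R M :=
  span R (b '' {t | deg t < n})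

variable {b : ι → M} {deg : ι → ℕ}

theorem spanDegLT_mono : Monotone (spanDegLT R b deg) := fun _ _ hmn =>
  span_mono (Set.image_mono fun _ ht => lt_of_lt_of_le ht hmn)

theorem mem_spanDegLT {t : ι} {n : ℕ} (ht : deg t < n) : b t ∈ spanDegLT R b deg n :=
  subset_span ⟨t, ht, rfl⟩

theorem spanDegLT_zero : spanDegLT R b deg 0 = ⊥ := by
  simp [spanDegLT]

theorem map_mem_of_mem_spanDegLT (T : M →ₗ[R] N) {P : Submodule R N} {n : ℕ}
    (hT : ∀ t, deg t < n → T (b t) ∈ P) {v : M} (hv : v ∈ spanDegLT R b deg n) : T v ∈ P := by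
  have hle : spanDegLT R b deg n ≤ P.comap T := by
    rw [spanDegLT, span_le]
    rintro _ ⟨t, ht, rfl⟩
    exact hT t ht
  exact hle hv

theorem repr_eq_zero_of_mem_spanDegLT {b : Module.Basis ι R M} {n : ℕ} {v : M}
    (hv : v ∈ spanDegLT R b deg n) {t : ι} (ht : n ≤ deg t) : b.repr v t = 0 := by
  by_contra hne
  exact ht.not_gt (b.mem_span_image.1 hv (Finsupp.mem_support_iff.2 hne))

theorem map_mem_spanDegLT_of_smodEq {T : M →ₗ[R] M} {f : ι → R} {s : ι → ι} {k : ℕ}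
    (hdeg : ∀ t, deg (s t) = deg t + k)
    (hT : ∀ t, T (b t) ≡ f t • b (s t) [SMOD spanDegLT R b deg (deg t + k)])
    {n : ℕ} {v : M} (hv : v ∈ spanDegLT R b deg n) : T v ∈ spanDegLT R b deg (n + k) := by
  refine map_mem_of_mem_spanDegLT T (fun t ht => ?_) hv
  have hlead : f t • b (s t) ∈ spanDegLT R b deg (n + k) :=
    smul_mem _ _ (mem_spanDegLT (by rw [hdeg]; lia))
  exact SModEq.zero.1 (((hT t).mono (spanDegLT_mono (by lia))).trans (SModEq.zero.2 hlead))

theorem repr_map_apply_of_smodEq {b : Module.Basis ι R M} {T : M →ₗ[R] M} {f : ι → R} {s : ι → ι}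
    {k : ℕ} (hs : Function.Injective s) (hdeg : ∀ t, deg (s t) = deg t + k)
    (hT : ∀ t, T (b t) ≡ f t • b (s t) [SMOD spanDegLT R b deg (deg t + k)])
    {v : M} {t : ι} (hv : v ∈ spanDegLT R b deg (deg t + 1)) :
    b.repr (T v) (s t) = f t * b.repr v t := by
  let L : M →ₗ[R] M := b.constr R fun u => f u • b (s u)
  have hL : ∀ u, L (b u) = f u • b (s u) := fun u => b.constr_basis R _ u
  have hdiff : (T - L) v ∈ spanDegLT R b deg (deg t + k) := by
    refine map_mem_of_mem_spanDegLT (T - L) (fun u hu => ?_) hv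
    rw [LinearMap.sub_apply, hL]
    exact spanDegLT_mono (by lia) (SModEq.sub_mem.1 (hT u))
  have hrepr : b.repr (T v) (s t) = b.repr (L v) (s t) := by
    have := repr_eq_zero_of_mem_spanDegLT hdiff (hdeg t).ge
    rwa [LinearMap.sub_apply, map_sub, Finsupp.sub_apply, sub_eq_zero] at this
  have hcoord : b.coord (s t) ∘ₗ L = f t • b.coord t := b.ext fun u => by
    rcases eq_or_ne u t with rfl | hne
    · simp [hL]
    · simp [hL, hne.symm, hs.ne hne.symm]
  rw [hrepr]
  exact LinearMap.congr_fun hcoord v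

theorem repr_eq_zero_of_commute {B : Type*} [Ring B] [Algebra R B] {b : Module.Basis ι R B}
    {a v : B} (hav : Commute a v) {f g : ι → R} {s : ι → ι} {k : ℕ} (hs : Function.Injective s)
    (hdeg : ∀ t, deg (s t) = deg t + k)
    (hleft : ∀ t, a * b t ≡ f t • b (s t) [SMOD spanDegLT R b deg (deg t + k)])
    (hright : ∀ t, b t * a ≡ g t • b (s t) [SMOD spanDegLT R b deg (deg t + k)])
    {t : ι} (hv : v ∈ spanDegLT R b deg (deg t + 1)) (ht : IsUnit (f t - g t)) :
    b.repr v t = 0 := by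
  have hT (u : ι) : (LinearMap.mulLeft R a - LinearMap.mulRight R a) (b u) ≡
      (f u - g u) • b (s u) [SMOD spanDegLT R b deg (deg u + k)] := by
    rw [sub_smul]
    exact (hleft u).sub (hright u)
  have hcoeff := repr_map_apply_of_smodEq hs hdeg hT hv
  rw [LinearMap.sub_apply, LinearMap.mulLeft_apply, LinearMap.mulRight_apply, hav.eq, sub_self,
    map_zero, Finsupp.zero_apply, eq_comm] at hcoeff
  exact ht.mul_right_eq_zero.1 hcoeff

theorem mem_sup_spanDegLT {b : Module.Basis ι R M} {C : Submodule R M} {n : ℕ} {v : M}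
    (hv : v ∈ spanDegLT R b deg (n + 1))
    (hC : ∀ t, deg t = n → b.repr v t = 0 ∨ b t ∈ C ⊔ spanDegLT R b deg n) :
    v ∈ C ⊔ spanDegLT R b deg n := by
  rw [← b.linearCombination_repr v, Finsupp.linearCombination_apply]
  refine sum_mem fun t ht => ?_
  have hlt : deg t < n + 1 := b.mem_span_image.1 hv ht
  rcases (Nat.lt_succ_iff.1 hlt).lt_or_eq with hlt | heq
  · exact smul_mem _ _ (mem_sup_right (mem_spanDegLT hlt))
  · exact smul_mem _ _ ((hC t heq).resolve_left (Finsupp.mem_support_iff.1 ht))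

end FilteredBasis

section CubicPolarization

variable {B : Type*} [Ring B]

/-- The coefficient of `u²v` in the noncommutative cube `(u • x + v • y) ^ 3`. With it
`α = cubicPolar x y` and `β = cubicPolar y x`. -/
def cubicPolar (x y : B) : B := x ^ 2 * y + x * y * x + y * x ^ 2

/-- The expression `γ` in two noncommuting variables. -/
def cubicGamma (x y : B) : B := (x * y) ^ 2 - y ^ 2 * x ^ 2

variable {x y : B}

theorem commute_cubicPolar_left_iff : Commute x (cubicPolar x y) ↔ Commute (x ^ 3) y := by
  have h : x * cubicPolar x y - cubicPolar x y * x = x ^ 3 * y - y * x ^ 3 := by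
    unfold cubicPolar; noncomm_ring
  rw [commute_iff_eq, commute_iff_eq, ← sub_eq_zero, h, sub_eq_zero]

theorem commute_cubicPolar_right_iff :
    Commute y (cubicPolar x y) ↔
      x ^ 2 * y ^ 2 + (x * y) ^ 2 = y ^ 2 * x ^ 2 + (y * x) ^ 2 := by
  have h : cubicPolar x y * y - y * cubicPolar x y =
      x ^ 2 * y ^ 2 + (x * y) ^ 2 - (y ^ 2 * x ^ 2 + (y * x) ^ 2) := by
    unfold cubicPolar; noncomm_ring
  rw [Commute.symm_iff, commute_iff_eq, ← sub_eq_zero, h, sub_eq_zero]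

theorem commute_cubicGamma_left (h1 : Commute (x ^ 3) y)
    (h3 : x ^ 2 * y ^ 2 + (x * y) ^ 2 = y ^ 2 * x ^ 2 + (y * x) ^ 2) :
    Commute (cubicGamma x y) x := by
  have key : cubicGamma x y * x - x * cubicGamma x y =
      (x ^ 3 * y ^ 2 - y ^ 2 * x ^ 3) -
        x * (x ^ 2 * y ^ 2 + (x * y) ^ 2 - (y ^ 2 * x ^ 2 + (y * x) ^ 2)) := by
    unfold cubicGamma; noncomm_ring
  rwa [(h1.pow_right 2).eq, h3, sub_self, sub_self, mul_zero, sub_zero, sub_eq_zero] at key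

theorem commute_cubicGamma_right (h2 : Commute x (y ^ 3))
    (h3 : x ^ 2 * y ^ 2 + (x * y) ^ 2 = y ^ 2 * x ^ 2 + (y * x) ^ 2) :
    Commute (cubicGamma x y) y := by
  have key : cubicGamma x y * y - y * cubicGamma x y =
      (y ^ 3 * x ^ 2 - x ^ 2 * y ^ 3) +
        (x ^ 2 * y ^ 2 + (x * y) ^ 2 - (y ^ 2 * x ^ 2 + (y * x) ^ 2)) * y := by
    unfold cubicGamma; noncomm_ring
  rwa [(h2.pow_left 2).eq, h3, sub_self, sub_self, zero_mul, add_zero, sub_eq_zero] at key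

end CubicPolarization

section RootOfUnity

variable {R : Type*} [CommRing R] {ω : R}

theorem pow_three_eq_one_of_cyclotomic (hω : ω ^ 2 + ω + 1 = 0) : ω ^ 3 = 1 := by
  linear_combination (ω - 1) * hω

theorem isUnit_pow_sub_pow (hω : ω ^ 2 + ω + 1 = 0) (h3 : IsUnit (3 : R)) {a b : ℕ}
    (hab : ¬ a ≡ b [MOD 3]) : IsUnit (ω ^ a - ω ^ b) := by
  have hω3 := pow_three_eq_one_of_cyclotomic hω
  have hunit : IsUnit ω := IsUnit.of_pow_eq_one hω3 (by norm_num)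
  have hsq : (ω ^ a - ω ^ b) ^ 2 = -3 * (ω ^ a * ω ^ b) := by
    rw [pow_eq_pow_mod a hω3, pow_eq_pow_mod b hω3]
    have ha := Nat.mod_lt a three_pos
    have hb := Nat.mod_lt b three_pos
    rw [Nat.ModEq] at hab
    interval_cases a % 3 <;> interval_cases b % 3 <;> first | exact absurd rfl hab | grind
  rw [← isUnit_pow_iff two_ne_zero, hsq]
  exact h3.neg.mul ((hunit.pow a).mul (hunit.pow b))

end RootOfUnity

section QLeibniz

variable {R B : Type*} [CommSemiring R] [Semiring B] [Algebra R B]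

-- The truncated exponent `n - 1` is harmless: for `n = 0` the sum is empty.
theorem mul_pow_of_mul_eq {a b : B} {u c : R} (h : a * b = u • (b * a) + algebraMap R B c)
    (n : ℕ) :
    a * b ^ n = u ^ n • (b ^ n * a) + (c * ∑ i ∈ Finset.range n, u ^ i) • b ^ (n - 1) := by
  induction n with
  | zero => simp
  | succ n ih =>
    have hpow : (c * ∑ i ∈ Finset.range n, u ^ i) • (b ^ (n - 1) * b) =
        (c * ∑ i ∈ Finset.range n, u ^ i) • b ^ n := by
      cases n <;> simp [pow_succ]
    rw [pow_succ, ← mul_assoc, ih, add_mul, smul_mul_assoc, smul_mul_assoc, hpow, mul_assoc, h,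
      Finset.sum_range_succ, mul_add, mul_smul_comm, ← Algebra.commutes, ← Algebra.smul_def,
      Nat.add_sub_cancel, ← mul_assoc]
    module

end QLeibniz

section ChangeOfScalars

variable {k R A : Type*} [CommSemiring k] [CommSemiring R] [Semiring A] [Algebra k R] [Algebra R A]
  [Algebra k A] [IsScalarTower k R A]

theorem restrictScalars_adjoin_of_adjoin_eq_top {s : Set R} (hs : Algebra.adjoin k s = ⊤)
    (t : Set A) : (Algebra.adjoin R t).restrictScalars k =
      Algebra.adjoin k (algebraMap R A '' s ∪ t) := by
  rw [Algebra.Subalgebra.restrictScalars_adjoin, ← Algebra.map_top, ← hs,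
    ← Algebra.adjoin_algebraMap, Algebra.adjoin_union]

variable (k R A) in
theorem restrictScalars_center :
    (Subalgebra.center R A).restrictScalars k = Subalgebra.center k A := by
  ext a
  simp only [Subalgebra.mem_restrictScalars, Subalgebra.mem_center_iff]

end ChangeOfScalars

section Center

variable {R B : Type*} [CommSemiring R] [Semiring B] [Algebra R B]

theorem mem_center_of_adjoin_pair_eq_top {x y : B} (hgen : Algebra.adjoin R {x, y} = ⊤) {z : B}
    (hx : Commute z x) (hy : Commute z y) : z ∈ Subalgebra.center R B := by
  refine Subalgebra.mem_center_iff.2 fun a => ?_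
  have ha : a ∈ Algebra.adjoin R {x, y} := hgen ▸ Algebra.mem_top
  refine (Algebra.commute_of_mem_adjoin_of_forall_mem_commute ha ?_).symm
  rintro _ (rfl | rfl)
  exacts [hx, hy]

end Center

/-- Straightening relations, by which `x, d, y` commute up to powers of `ω` and lower terms. In the
Clifford algebra `d = δ`, and `p, q` are `α, β`, taken as scalars. -/
structure IsPBWTriple {R B : Type*} [CommRing R] [Ring B] [Algebra R B] (ω p q : R) (x d y : B) :
    Prop where
  y_mul_x : y * x = ω • (x * y) + d
  d_mul_x : d * x = ω ^ 2 • (x * d) + algebraMap R B p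
  y_mul_d : y * d = ω ^ 2 • (d * y) + algebraMap R B q

namespace IsPBWTriple

open MulOpposite

variable {R B : Type*} [CommRing R] [Ring B] [Algebra R B] {ω p q : R} {x d y : B}

theorem op (h : IsPBWTriple ω p q x d y) : IsPBWTriple ω q p (op y) (op d) (op x) where
  y_mul_x := by simp [← op_mul, h.y_mul_x]
  d_mul_x := by simp [← op_mul, h.y_mul_d]
  y_mul_d := by simp [← op_mul, h.d_mul_x]

theorem of_cubicPolar (hω : ω ^ 2 + ω + 1 = 0) (hxy : cubicPolar x y = algebraMap R B p)
    (hyx : cubicPolar y x = algebraMap R B q) :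
    IsPBWTriple ω p q x (y * x - ω • (x * y)) y where
  y_mul_x := by abel
  d_mul_x := by
    simp only [← hxy, cubicPolar, pow_two, mul_assoc, mul_sub, sub_mul, smul_sub, smul_mul_assoc,
      mul_smul_comm]
    match_scalars <;> grind
  y_mul_d := by
    simp only [← hyx, cubicPolar, pow_two, mul_assoc, mul_sub, sub_mul, smul_sub, smul_mul_assoc,
      mul_smul_comm]
    match_scalars <;> grind

theorem cubicPolar_x_y (hω : ω ^ 2 + ω + 1 = 0) (h : IsPBWTriple ω p q x d y) :
    cubicPolar x y = algebraMap R B p := by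
  have hxyx : x * y * x = ω • (x ^ 2 * y) + x * d := by
    rw [mul_assoc, h.y_mul_x, mul_add, mul_smul_comm, pow_two, mul_assoc]
  have hyxx : y * x ^ 2 = ω ^ 2 • (x ^ 2 * y) + (ω + ω ^ 2) • (x * d) + algebraMap R B p := by
    rw [pow_two x, ← mul_assoc, h.y_mul_x, add_mul, smul_mul_assoc, hxyx, h.d_mul_x, ← pow_two]
    module
  rw [cubicPolar, hxyx, hyxx]
  match_scalars <;> grind

theorem cubicPolar_y_x (hω : ω ^ 2 + ω + 1 = 0) (h : IsPBWTriple ω p q x d y) :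
    cubicPolar y x = algebraMap R B q := by
  refine op_injective (Eq.trans ?_ (h.op.cubicPolar_x_y hω))
  simp only [cubicPolar, op_add, op_mul, op_pow, mul_assoc]
  abel

theorem d_mul_x_pow (h : IsPBWTriple ω p q x d y) (n : ℕ) :
    d * x ^ n = (ω ^ 2) ^ n • (x ^ n * d) +
      (p * ∑ i ∈ Finset.range n, (ω ^ 2) ^ i) • x ^ (n - 1) :=
  mul_pow_of_mul_eq h.d_mul_x n

theorem y_mul_d_pow (h : IsPBWTriple ω p q x d y) (n : ℕ) :
    y * d ^ n = (ω ^ 2) ^ n • (d ^ n * y) +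
      (q * ∑ i ∈ Finset.range n, (ω ^ 2) ^ i) • d ^ (n - 1) :=
  mul_pow_of_mul_eq h.y_mul_d n

theorem y_pow_mul_d (h : IsPBWTriple ω p q x d y) (n : ℕ) :
    y ^ n * d = (ω ^ 2) ^ n • (d * y ^ n) +
      (q * ∑ i ∈ Finset.range n, (ω ^ 2) ^ i) • y ^ (n - 1) := by
  simpa using congrArg unop (h.op.d_mul_x_pow n)

theorem commute_d_pow_three_y (hω : ω ^ 2 + ω + 1 = 0) (h : IsPBWTriple ω p q x d y) :
    Commute (d ^ 3) y := by
  have hsum : ∑ i ∈ Finset.range 3, (ω ^ 2) ^ i = 0 := by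
    simp only [Finset.sum_range_succ, Finset.sum_range_zero]
    grind
  have hω6 : (ω ^ 2) ^ 3 = 1 := by grind
  have hyd := h.y_mul_d_pow 3
  rw [hsum, hω6, mul_zero, zero_smul, one_smul, add_zero] at hyd
  exact hyd.symm

theorem commute_d_pow_three_x (hω : ω ^ 2 + ω + 1 = 0) (h : IsPBWTriple ω p q x d y) :
    Commute (d ^ 3) x :=
  op_injective (h.op.commute_d_pow_three_y hω).symm

theorem commute_x_pow_three_y (hω : ω ^ 2 + ω + 1 = 0) (h : IsPBWTriple ω p q x d y) :
    Commute (x ^ 3) y := by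
  rw [← commute_cubicPolar_left_iff, h.cubicPolar_x_y hω]
  exact Algebra.commute_algebraMap_right p x

theorem commute_x_y_pow_three (hω : ω ^ 2 + ω + 1 = 0) (h : IsPBWTriple ω p q x d y) :
    Commute x (y ^ 3) := by
  rw [Commute.symm_iff, ← commute_cubicPolar_left_iff, h.cubicPolar_y_x hω]
  exact Algebra.commute_algebraMap_right q y

theorem sq_mul_sq_add (hω : ω ^ 2 + ω + 1 = 0) (h : IsPBWTriple ω p q x d y) :
    x ^ 2 * y ^ 2 + (x * y) ^ 2 = y ^ 2 * x ^ 2 + (y * x) ^ 2 := by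
  rw [← commute_cubicPolar_right_iff, h.cubicPolar_x_y hω]
  exact Algebra.commute_algebraMap_right p y

theorem cubicGamma_eq (hω : ω ^ 2 + ω + 1 = 0) (h : IsPBWTriple ω p q x d y) :
    cubicGamma x y = (1 - ω) • (x * (d * y)) + d ^ 2 + ω • (p • y + q • x) := by
  have hassoc {a b c : B} (hab : a * b = c) (z : B) : a * (b * z) = c * z := by
    rw [← mul_assoc, hab]
  simp only [cubicGamma, pow_two, mul_assoc, h.y_mul_x, hassoc h.y_mul_x, h.d_mul_x,
    hassoc h.d_mul_x, h.y_mul_d, mul_add, add_mul, smul_add, smul_mul_assoc, mul_smul_comm,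
    ← Algebra.commutes, ← Algebra.smul_def]
  match_scalars <;> grind

end IsPBWTriple

/-- The ordered monomial `xⁱ dʲ yˡ` with exponent vector `t = (i, j, l)`. -/
def pbwMonomial {B : Type*} [Monoid B] (x d y : B) (t : ℕ × ℕ × ℕ) : B :=
  x ^ t.1 * d ^ t.2.1 * y ^ t.2.2

/-- The total degree of an ordered monomial; `d` has degree one, not two, which is what makes the
straightening relations homogeneous `ω`-commutations up to lower terms. -/
def pbwDegree (t : ℕ × ℕ × ℕ) : ℕ := t.1 + t.2.1 + t.2.2

/-- The filtration of an algebra by the degree of the ordered monomials in `x, d, y`, starting from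
`⊥`. -/
abbrev pbwFiltration (R : Type*) {B : Type*} [CommRing R] [Ring B] [Algebra R B] (x d y : B) :
    ℕ → Submodule R B :=
  spanDegLT R (pbwMonomial x d y) pbwDegree

namespace IsPBWTriple

variable {R B : Type*} [CommRing R] [Ring B] [Algebra R B] {ω p q : R} {x d y : B}

open Submodule

local notation "𝓕" => pbwFiltration R x d y

theorem x_mul_pbwMonomial (i j l : ℕ) :
    x * pbwMonomial x d y (i, j, l) = pbwMonomial x d y (i + 1, j, l) := by
  simp only [pbwMonomial, pow_succ', mul_assoc]

theorem pbwMonomial_mul_y (i j l : ℕ) :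
    pbwMonomial x d y (i, j, l) * y = pbwMonomial x d y (i, j, l + 1) := by
  simp only [pbwMonomial, pow_succ, mul_assoc]

theorem d_mul_pbwMonomial (h : IsPBWTriple ω p q x d y) (i j l : ℕ) :
    d * pbwMonomial x d y (i, j, l) ≡ (ω ^ 2) ^ i • pbwMonomial x d y (i, j + 1, l)
      [SMOD 𝓕 (i + j + l + 1)] := by
  have hlow : pbwMonomial x d y (i - 1, j, l) ∈ 𝓕 (i + j + l + 1) :=
    mem_spanDegLT (by simp only [pbwDegree]; lia)
  have heq : d * pbwMonomial x d y (i, j, l) - (ω ^ 2) ^ i • pbwMonomial x d y (i, j + 1, l) =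
      (p * ∑ s ∈ Finset.range i, (ω ^ 2) ^ s) • pbwMonomial x d y (i - 1, j, l) := by
    simp only [pbwMonomial, ← mul_assoc, h.d_mul_x_pow, add_mul, smul_mul_assoc, pow_succ']
    abel
  rw [SModEq.sub_mem, heq]
  exact smul_mem _ _ hlow

theorem pbwMonomial_mul_d (h : IsPBWTriple ω p q x d y) (i j l : ℕ) :
    pbwMonomial x d y (i, j, l) * d ≡ (ω ^ 2) ^ l • pbwMonomial x d y (i, j + 1, l)
      [SMOD 𝓕 (i + j + l + 1)] := by
  have hlow : pbwMonomial x d y (i, j, l - 1) ∈ 𝓕 (i + j + l + 1) :=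
    mem_spanDegLT (by simp only [pbwDegree]; lia)
  have heq : pbwMonomial x d y (i, j, l) * d - (ω ^ 2) ^ l • pbwMonomial x d y (i, j + 1, l) =
      (q * ∑ s ∈ Finset.range l, (ω ^ 2) ^ s) • pbwMonomial x d y (i, j, l - 1) := by
    simp only [pbwMonomial, mul_assoc, h.y_pow_mul_d, mul_add, mul_smul_comm, pow_succ]
    abel
  rw [SModEq.sub_mem, heq]
  exact smul_mem _ _ hlow

theorem x_mul_mem {n : ℕ} {v : B} (hv : v ∈ 𝓕 n) : x * v ∈ 𝓕 (n + 1) := by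
  refine map_mem_of_mem_spanDegLT (LinearMap.mulLeft R x) (fun t ht => ?_) hv
  obtain ⟨i, j, l⟩ := t
  rw [LinearMap.mulLeft_apply, x_mul_pbwMonomial]
  exact mem_spanDegLT (by simp only [pbwDegree] at ht ⊢; lia)

theorem d_mul_mem (h : IsPBWTriple ω p q x d y) {n : ℕ} {v : B} (hv : v ∈ 𝓕 n) :
    d * v ∈ 𝓕 (n + 1) :=
  map_mem_spanDegLT_of_smodEq (T := LinearMap.mulLeft R d) (s := fun t => (t.1, t.2.1 + 1, t.2.2))
    (fun t => by simp only [pbwDegree]; lia) (fun t => h.d_mul_pbwMonomial t.1 t.2.1 t.2.2) hv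

theorem x_mul_smodEq {n : ℕ} {v w : B} (hvw : v ≡ w [SMOD 𝓕 n]) :
    x * v ≡ x * w [SMOD 𝓕 (n + 1)] := by
  rw [SModEq.sub_mem, ← mul_sub]
  exact x_mul_mem (SModEq.sub_mem.1 hvw)

theorem d_mul_smodEq (h : IsPBWTriple ω p q x d y) {n : ℕ} {v w : B} (hvw : v ≡ w [SMOD 𝓕 n]) :
    d * v ≡ d * w [SMOD 𝓕 (n + 1)] := by
  rw [SModEq.sub_mem, ← mul_sub]
  exact h.d_mul_mem (SModEq.sub_mem.1 hvw)

theorem y_mul_pbwMonomial (h : IsPBWTriple ω p q x d y) (i j l : ℕ) :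
    y * pbwMonomial x d y (i, j, l) ≡ ω ^ (i + 2 * j) • pbwMonomial x d y (i, j, l + 1)
      [SMOD 𝓕 (i + j + l + 1)] := by
  induction i with
  | zero =>
    have hlow : pbwMonomial x d y (0, j - 1, l) ∈ 𝓕 (0 + j + l + 1) :=
      mem_spanDegLT (by simp only [pbwDegree]; lia)
    have heq : y * pbwMonomial x d y (0, j, l) -
          ω ^ (0 + 2 * j) • pbwMonomial x d y (0, j, l + 1) =
        (q * ∑ s ∈ Finset.range j, (ω ^ 2) ^ s) • pbwMonomial x d y (0, j - 1, l) := by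
      simp only [pbwMonomial, pow_zero, one_mul, ← mul_assoc, h.y_mul_d_pow, add_mul,
        smul_mul_assoc, zero_add, pow_mul, pow_succ' y]
      rw [mul_assoc _ y]
      abel
    rw [SModEq.sub_mem, heq]
    exact smul_mem _ _ hlow
  | succ i ih =>
    have hd : d * pbwMonomial x d y (i, j, l) ∈ 𝓕 (i + j + l + 2) :=
      h.d_mul_mem (mem_spanDegLT (Nat.lt_succ_self _))
    have hsum := ((x_mul_smodEq ih).smul ω).add (SModEq.zero.2 hd)
    convert hsum using 1
    · ring_nf
    · rw [← x_mul_pbwMonomial, ← mul_assoc, h.y_mul_x, add_mul, smul_mul_assoc, mul_assoc]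
    · rw [← x_mul_pbwMonomial, mul_smul_comm]
      module

theorem y_mul_mem (h : IsPBWTriple ω p q x d y) {n : ℕ} {v : B} (hv : v ∈ 𝓕 n) :
    y * v ∈ 𝓕 (n + 1) :=
  map_mem_spanDegLT_of_smodEq (T := LinearMap.mulLeft R y) (s := fun t => (t.1, t.2.1, t.2.2 + 1))
    (fun t => by simp only [pbwDegree]; lia) (fun t => h.y_mul_pbwMonomial t.1 t.2.1 t.2.2) hv

theorem exists_mem_pbwFiltration (h : IsPBWTriple ω p q x d y)
    (hgen : Algebra.adjoin R {x, y} = ⊤) (a : B) : ∃ n, a ∈ 𝓕 n := by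
  have hmul : ∀ n, ∀ v ∈ 𝓕 n, ∃ m, a * v ∈ 𝓕 m := by
    have ha : a ∈ Algebra.adjoin R {x, y} := hgen ▸ Algebra.mem_top
    induction ha using Algebra.adjoin_induction with
    | mem b hb =>
      intro n v hv
      rcases hb with rfl | rfl
      · exact ⟨n + 1, x_mul_mem hv⟩
      · exact ⟨n + 1, h.y_mul_mem hv⟩
    | algebraMap r => exact fun n v hv => ⟨n, by rw [← Algebra.smul_def]; exact smul_mem _ r hv⟩
    | add b c _ _ hb hc =>
      intro n v hv
      obtain ⟨m₁, h₁⟩ := hb n v hv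
      obtain ⟨m₂, h₂⟩ := hc n v hv
      rw [add_mul]
      exact ⟨max m₁ m₂, add_mem (spanDegLT_mono (le_max_left _ _) h₁)
        (spanDegLT_mono (le_max_right _ _) h₂)⟩
    | mul b c _ _ hb hc =>
      intro n v hv
      obtain ⟨m, hm⟩ := hc n v hv
      rw [mul_assoc]
      exact hb m _ hm
  have hone : (1 : B) ∈ 𝓕 1 := by
    simpa [pbwMonomial] using
      mem_spanDegLT (R := R) (b := pbwMonomial x d y) (deg := pbwDegree) (t := (0, 0, 0)) one_pos
  simpa using hmul 1 1 hone

theorem top_le_span_pbwMonomial (h : IsPBWTriple ω p q x d y)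
    (hgen : Algebra.adjoin R {x, y} = ⊤) : ⊤ ≤ span R (Set.range (pbwMonomial x d y)) := by
  intro a _
  obtain ⟨n, hn⟩ := h.exists_mem_pbwFiltration hgen a
  exact span_mono (Set.image_subset_range _ _) hn

theorem cubicGamma_mul_pbwMonomial (hω : ω ^ 2 + ω + 1 = 0) (h : IsPBWTriple ω p q x d y)
    (i j l : ℕ) :
    cubicGamma x y * pbwMonomial x d y (i, j, l) ≡
      ((1 - ω) * (ω ^ (i + 2 * j) * (ω ^ 2) ^ i)) • pbwMonomial x d y (i + 1, j + 1, l + 1)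
      [SMOD 𝓕 (i + j + l + 3)] := by
  set M := pbwMonomial x d y (i, j, l)
  have hM : M ∈ 𝓕 (i + j + l + 1) := mem_spanDegLT (Nat.lt_succ_self _)
  have hxdy : x * (d * (y * M)) ≡ (ω ^ (i + 2 * j) * (ω ^ 2) ^ i) •
      pbwMonomial x d y (i + 1, j + 1, l + 1) [SMOD 𝓕 (i + j + l + 3)] := by
    have hd := (h.d_mul_pbwMonomial i j (l + 1)).smul (ω ^ (i + 2 * j))
    rw [← mul_smul_comm] at hd
    have hdy := (h.d_mul_smodEq (h.y_mul_pbwMonomial i j l)).trans hd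
    simpa only [mul_smul_comm, smul_smul, x_mul_pbwMonomial] using x_mul_smodEq hdy
  have hlow : d ^ 2 * M + ω • (p • (y * M) + q • (x * M)) ∈ 𝓕 (i + j + l + 3) := by
    rw [pow_two, mul_assoc]
    exact add_mem (h.d_mul_mem (h.d_mul_mem hM)) (smul_mem _ _ (spanDegLT_mono (Nat.le_succ _)
      (add_mem (smul_mem _ _ (h.y_mul_mem hM)) (smul_mem _ _ (x_mul_mem hM)))))
  have hsum := (hxdy.smul (1 - ω)).add (SModEq.zero.2 hlow)
  rw [smul_smul, add_zero] at hsum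
  convert hsum using 1
  rw [h.cubicGamma_eq hω]
  simp only [add_mul, smul_mul_assoc, mul_assoc, add_assoc]

theorem cubicGamma_mul_mem (hω : ω ^ 2 + ω + 1 = 0) (h : IsPBWTriple ω p q x d y) {n : ℕ} {v : B}
    (hv : v ∈ 𝓕 n) : cubicGamma x y * v ∈ 𝓕 (n + 3) :=
  map_mem_spanDegLT_of_smodEq (T := LinearMap.mulLeft R (cubicGamma x y))
    (s := fun t => (t.1 + 1, t.2.1 + 1, t.2.2 + 1)) (fun t => by simp only [pbwDegree]; lia)
    (fun t => h.cubicGamma_mul_pbwMonomial hω t.1 t.2.1 t.2.2) hv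

variable (R x d y) in
/-- The subalgebra generated by the four obvious central elements of an algebra with straightening
relations; the last one is `γ`. -/
def centralSubalgebra : Subalgebra R B :=
  Algebra.adjoin R {x ^ 3, y ^ 3, d ^ 3, cubicGamma x y}

local notation "𝓒" => centralSubalgebra R x d y

theorem centralSubalgebra_le_center (hω : ω ^ 2 + ω + 1 = 0) (h : IsPBWTriple ω p q x d y)
    (hgen : Algebra.adjoin R {x, y} = ⊤) : 𝓒 ≤ Subalgebra.center R B := by
  have hxy := h.commute_x_pow_three_y hω
  have hyx := h.commute_x_y_pow_three hω
  have hrel := h.sq_mul_sq_add hω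
  refine Algebra.adjoin_le ?_
  rintro _ (rfl | rfl | rfl | rfl)
  · exact mem_center_of_adjoin_pair_eq_top hgen (Commute.pow_self x 3) hxy
  · exact mem_center_of_adjoin_pair_eq_top hgen hyx.symm (Commute.pow_self y 3)
  · exact mem_center_of_adjoin_pair_eq_top hgen (h.commute_d_pow_three_x hω)
      (h.commute_d_pow_three_y hω)
  · exact mem_center_of_adjoin_pair_eq_top hgen (commute_cubicGamma_left hxy hrel)
      (commute_cubicGamma_right hyx hrel)

theorem pbwMonomial_three_mul_mem (a b c : ℕ) : pbwMonomial x d y (3 * a, 3 * b, 3 * c) ∈ 𝓒 := by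
  simp only [pbwMonomial, pow_mul]
  refine mul_mem (mul_mem (pow_mem ?_ a) (pow_mem ?_ b)) (pow_mem ?_ c) <;>
    exact Algebra.subset_adjoin (by simp)

theorem pbwMonomial_add_mem_sup (hω : ω ^ 2 + ω + 1 = 0) (h3 : IsUnit (3 : R))
    (h : IsPBWTriple ω p q x d y) (a b c r : ℕ) :
    pbwMonomial x d y (3 * a + r, 3 * b + r, 3 * c + r) ∈
      Subalgebra.toSubmodule 𝓒 ⊔ 𝓕 (3 * a + r + (3 * b + r) + (3 * c + r)) := by
  induction r with
  | zero => exact mem_sup_left (pbwMonomial_three_mul_mem a b c)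
  | succ r ih =>
    obtain ⟨g, hg, v, hv, hgv⟩ := mem_sup.1 ih
    have hlead := (h.cubicGamma_mul_pbwMonomial hω (3 * a + r) (3 * b + r) (3 * c + r)).symm
    have hunit :
        IsUnit ((1 - ω) * (ω ^ (3 * a + r + 2 * (3 * b + r)) * (ω ^ 2) ^ (3 * a + r))) := by
      have hω1 : IsUnit ω := IsUnit.of_pow_eq_one (pow_three_eq_one_of_cyclotomic hω) three_ne_zero
      have hω2 : IsUnit (1 - ω) := by
        simpa using isUnit_pow_sub_pow hω h3 (a := 0) (b := 1) (by decide)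
      exact hω2.mul ((hω1.pow _).mul ((hω1.pow 2).pow _))
    have hdeg : 3 * a + (r + 1) + (3 * b + (r + 1)) + (3 * c + (r + 1)) =
      3 * a + r + (3 * b + r) + (3 * c + r) + 3 := by ring
    rw [hdeg, ← smul_mem_iff_of_isUnit _ hunit, ← sub_add_cancel (_ • _) (_ * _)]
    refine add_mem (mem_sup_right (SModEq.sub_mem.1 hlead)) ?_
    rw [← hgv, mul_add]
    exact add_mem (mem_sup_left (Subalgebra.mul_mem 𝓒 (Algebra.subset_adjoin (by simp)) hg))
      (mem_sup_right (h.cubicGamma_mul_mem hω hv))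

theorem pbwMonomial_mem_sup (hω : ω ^ 2 + ω + 1 = 0) (h3 : IsUnit (3 : R))
    (h : IsPBWTriple ω p q x d y) {i j l : ℕ} (hij : i ≡ j [MOD 3]) (hil : i ≡ l [MOD 3]) :
    pbwMonomial x d y (i, j, l) ∈ Subalgebra.toSubmodule 𝓒 ⊔ 𝓕 (i + j + l) := by
  have := h.pbwMonomial_add_mem_sup hω h3 (i / 3) (j / 3) (l / 3) (i % 3)
  have hj : 3 * (j / 3) + i % 3 = j := by rw [hij]; exact Nat.div_add_mod j 3
  have hl : 3 * (l / 3) + i % 3 = l := by rw [hil]; exact Nat.div_add_mod l 3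
  rwa [Nat.div_add_mod, hj, hl] at this

section LeadingCoefficients

variable {b : Module.Basis (ℕ × ℕ × ℕ) R B}

theorem repr_eq_zero_of_commute_y (hω : ω ^ 2 + ω + 1 = 0) (h3 : IsUnit (3 : R))
    (h : IsPBWTriple ω p q x d y) (hb : ⇑b = pbwMonomial x d y) {z : B} (hz : Commute y z)
    {i j l : ℕ} (hzF : z ∈ 𝓕 (i + j + l + 1)) (hij : ¬ i ≡ j [MOD 3]) :
    b.repr z (i, j, l) = 0 := by
  refine repr_eq_zero_of_commute hz (f := fun t => ω ^ (t.1 + 2 * t.2.1)) (g := fun _ => ω ^ 0)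
    (s := fun t => (t.1, t.2.1, t.2.2 + 1)) (deg := pbwDegree) (k := 1)
    (fun s t hst => by simpa [Prod.ext_iff] using hst) (fun t => by simp only [pbwDegree]; lia)
    (fun t => hb ▸ h.y_mul_pbwMonomial t.1 t.2.1 t.2.2) (fun t => ?_) (by rwa [hb])
    (isUnit_pow_sub_pow hω h3 fun hmod => hij ?_)
  · rw [hb, pow_zero, one_smul, pbwMonomial_mul_y]
  · simp only [Nat.ModEq] at hmod ⊢
    lia

theorem repr_eq_zero_of_commute_d (hω : ω ^ 2 + ω + 1 = 0) (h3 : IsUnit (3 : R))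
    (h : IsPBWTriple ω p q x d y) (hb : ⇑b = pbwMonomial x d y) {z : B} (hz : Commute d z)
    {i j l : ℕ} (hzF : z ∈ 𝓕 (i + j + l + 1)) (hil : ¬ i ≡ l [MOD 3]) :
    b.repr z (i, j, l) = 0 := by
  refine repr_eq_zero_of_commute hz (f := fun t => (ω ^ 2) ^ t.1) (g := fun t => (ω ^ 2) ^ t.2.2)
    (s := fun t => (t.1, t.2.1 + 1, t.2.2)) (deg := pbwDegree) (k := 1)
    (fun s t hst => by simpa [Prod.ext_iff] using hst) (fun t => by simp only [pbwDegree]; lia)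
    (fun t => hb ▸ h.d_mul_pbwMonomial t.1 t.2.1 t.2.2)
    (fun t => hb ▸ h.pbwMonomial_mul_d t.1 t.2.1 t.2.2) (by rwa [hb]) ?_
  rw [← pow_mul, ← pow_mul]
  exact isUnit_pow_sub_pow hω h3 fun hmod =>
    hil (Nat.ModEq.cancel_left_of_coprime (by decide) hmod)

theorem mem_sup_of_mem_center (hω : ω ^ 2 + ω + 1 = 0) (h3 : IsUnit (3 : R))
    (h : IsPBWTriple ω p q x d y) (hb : ⇑b = pbwMonomial x d y) {z : B}
    (hz : z ∈ Subalgebra.center R B) {n : ℕ} (hzF : z ∈ 𝓕 (n + 1)) :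
    z ∈ Subalgebra.toSubmodule 𝓒 ⊔ 𝓕 n := by
  have hcomm := Subalgebra.mem_center_iff.1 hz
  have hsuff := mem_sup_spanDegLT (b := b) (deg := pbwDegree) (C := Subalgebra.toSubmodule 𝓒)
    (n := n) (v := z) (by rwa [hb])
  rw [hb] at hsuff
  refine hsuff ?_
  rintro ⟨i, j, l⟩ rfl
  by_cases hij : i ≡ j [MOD 3]
  · by_cases hil : i ≡ l [MOD 3]
    · exact Or.inr (h.pbwMonomial_mem_sup hω h3 hij hil)
    · exact Or.inl (h.repr_eq_zero_of_commute_d hω h3 hb (hcomm d) hzF hil)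
  · exact Or.inl (h.repr_eq_zero_of_commute_y hω h3 hb (hcomm y) hzF hij)

end LeadingCoefficients

theorem center_eq_centralSubalgebra (hω : ω ^ 2 + ω + 1 = 0) (h3 : IsUnit (3 : R))
    (h : IsPBWTriple ω p q x d y) (hgen : Algebra.adjoin R {x, y} = ⊤)
    (hli : LinearIndependent R (pbwMonomial x d y)) : Subalgebra.center R B = 𝓒 := by
  have hle := h.centralSubalgebra_le_center hω hgen
  have hb := Module.Basis.coe_mk hli (h.top_le_span_pbwMonomial hgen)
  refine le_antisymm (fun z hz => ?_) hle
  obtain ⟨n, hn⟩ := h.exists_mem_pbwFiltration hgen z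
  induction n generalizing z with
  | zero =>
    rw [pbwFiltration, spanDegLT_zero, mem_bot] at hn
    exact hn ▸ zero_mem _
  | succ n ih =>
    obtain ⟨c, hc, v, hv, rfl⟩ := mem_sup.1 (h.mem_sup_of_mem_center hω h3 hb hz hn)
    exact add_mem hc (ih v ((add_mem_cancel_left (hle hc)).1 hz) hv)

theorem linearIndependent_of_map {B' : Type*} [Ring B'] [Algebra R B'] {x' d' y' : B'}
    (h : IsPBWTriple ω p q x d y) (h' : IsPBWTriple ω p q x' d' y') (f : B →ₐ[R] B')
    (hx : f x = x') (hy : f y = y') (hli : LinearIndependent R (pbwMonomial x' d' y')) :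
    LinearIndependent R (pbwMonomial x d y) := by
  have hd : f d = d' := by
    have := congrArg f h.y_mul_x
    rwa [map_mul, map_add, map_smul, map_mul, hx, hy, h'.y_mul_x, add_right_inj, eq_comm] at this
  refine LinearIndependent.of_comp f.toLinearMap ?_
  convert hli using 1
  funext t
  simp [pbwMonomial, hx, hd, hy]

end IsPBWTriple

noncomputable section

/-- The free module on the ordered monomials `xⁱ dʲ yˡ`, the space of the regular representation of
the straightening relations. -/
abbrev PBWModel (R : Type*) [CommRing R] : Type _ := ℕ × ℕ × ℕ →₀ R

namespace PBWModel

variable {R : Type*} [CommRing R] {ω p q : R}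

/-- The formal ordered monomial `xⁱ dʲ yˡ`, as a basis vector. -/
def monomial (R : Type*) [CommRing R] (i j l : ℕ) : PBWModel R :=
  Finsupp.single (i, j, l) 1

/-- The operator that sends `xⁱ dʲ yˡ` to `f i j l`. -/
def extend (f : ℕ → ℕ → ℕ → PBWModel R) : Module.End R (PBWModel R) :=
  Finsupp.linearCombination R fun t => f t.1 t.2.1 t.2.2

theorem extend_monomial (f : ℕ → ℕ → ℕ → PBWModel R) (i j l : ℕ) :
    extend f (monomial R i j l) = f i j l := by
  simp [extend, monomial]

theorem end_ext {S T : Module.End R (PBWModel R)}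
    (h : ∀ i j l, S (monomial R i j l) = T (monomial R i j l)) : S = T :=
  Finsupp.basisSingleOne.ext fun t => by simpa [monomial] using h t.1 t.2.1 t.2.2

variable (R) in
/-- Left multiplication by `x` on formal ordered monomials. -/
def mulX : Module.End R (PBWModel R) :=
  extend fun i j l => monomial R (i + 1) j l

/-- The normal form of `d * xⁱ dʲ yˡ`, obtained by moving `d` to the right through `xⁱ`. -/
def dMulMonomial (ω p : R) : ℕ → ℕ → ℕ → PBWModel R
  | 0, j, l => monomial R 0 (j + 1) l
  | i + 1, j, l => ω ^ 2 • mulX R (dMulMonomial ω p i j l) + p • monomial R i j l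

/-- Left multiplication by `d` on formal ordered monomials. -/
def mulD (ω p : R) : Module.End R (PBWModel R) :=
  extend (dMulMonomial ω p)

/-- The normal form of `y * xⁱ dʲ yˡ`, obtained by moving `y` to the right through `xⁱ`, then
through `dʲ`. -/
def yMulMonomial (ω p q : R) : ℕ → ℕ → ℕ → PBWModel R
  | 0, 0, l => monomial R 0 0 (l + 1)
  | 0, j + 1, l => ω ^ 2 • mulD ω p (yMulMonomial ω p q 0 j l) + q • monomial R 0 j l
  | i + 1, j, l => ω • mulX R (yMulMonomial ω p q i j l) + mulD ω p (monomial R i j l)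

/-- Left multiplication by `y` on formal ordered monomials. -/
def mulY (ω p q : R) : Module.End R (PBWModel R) :=
  extend (yMulMonomial ω p q)

theorem mulX_monomial (i j l : ℕ) : mulX R (monomial R i j l) = monomial R (i + 1) j l :=
  extend_monomial _ i j l

theorem mulD_monomial_zero (j l : ℕ) :
    mulD ω p (monomial R 0 j l) = monomial R 0 (j + 1) l := by
  rw [mulD, extend_monomial, dMulMonomial]

theorem mulY_monomial_zero_zero (l : ℕ) :
    mulY ω p q (monomial R 0 0 l) = monomial R 0 0 (l + 1) := by
  rw [mulY, extend_monomial, yMulMonomial]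

theorem mulD_mul_mulX :
    mulD ω p * mulX R = ω ^ 2 • (mulX R * mulD ω p) + algebraMap R _ p := by
  refine end_ext fun i j l => ?_
  simp [mulX_monomial, mulD, extend_monomial, dMulMonomial, Algebra.algebraMap_eq_smul_one]

theorem mulY_mul_mulX :
    mulY ω p q * mulX R = ω • (mulX R * mulY ω p q) + mulD ω p := by
  refine end_ext fun i j l => ?_
  simp [mulX_monomial, mulY, extend_monomial, yMulMonomial]

theorem mulY_mul_mulD (hω : ω ^ 2 + ω + 1 = 0) :
    mulY ω p q * mulD ω p = ω ^ 2 • (mulD ω p * mulY ω p q) + algebraMap R _ q := by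
  refine end_ext fun i j l => ?_
  induction i with
  | zero =>
    simp [mulD_monomial_zero, mulY, extend_monomial, yMulMonomial, Algebra.algebraMap_eq_smul_one]
  | succ i ih =>
    have hdx (v : PBWModel R) : mulD ω p (mulX R v) = ω ^ 2 • mulX R (mulD ω p v) + p • v :=
      LinearMap.congr_fun mulD_mul_mulX v
    have hyx (v : PBWModel R) :
        mulY ω p q (mulX R v) = ω • mulX R (mulY ω p q v) + mulD ω p v :=
      LinearMap.congr_fun mulY_mul_mulX v
    have hyd : mulY ω p q (mulD ω p (monomial R i j l)) =
        ω ^ 2 • mulD ω p (mulY ω p q (monomial R i j l)) + q • monomial R i j l := ih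
    simp only [← mulX_monomial, Module.End.mul_apply, LinearMap.add_apply, LinearMap.smul_apply,
      Module.algebraMap_end_apply, hdx, hyx, hyd, map_add, map_smul]
    match_scalars <;> grind

theorem isPBWTriple (hω : ω ^ 2 + ω + 1 = 0) :
    IsPBWTriple ω p q (mulX R) (mulD ω p) (mulY ω p q) where
  y_mul_x := mulY_mul_mulX
  d_mul_x := mulD_mul_mulX
  y_mul_d := mulY_mul_mulD hω

theorem pbwMonomial_apply_monomial_zero (i j l : ℕ) :
    pbwMonomial (mulX R) (mulD ω p) (mulY ω p q) (i, j, l) (monomial R 0 0 0) =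
      monomial R i j l := by
  have hy : (mulY ω p q ^ l) (monomial R 0 0 0) = monomial R 0 0 l := by
    induction l with
    | zero => rfl
    | succ l ih => rw [pow_succ', Module.End.mul_apply, ih, mulY_monomial_zero_zero]
  have hd : (mulD ω p ^ j) (monomial R 0 0 l) = monomial R 0 j l := by
    induction j with
    | zero => rfl
    | succ j ih => rw [pow_succ', Module.End.mul_apply, ih, mulD_monomial_zero]
  have hx : (mulX R ^ i) (monomial R 0 j l) = monomial R i j l := by
    induction i with
    | zero => rfl
    | succ i ih => rw [pow_succ', Module.End.mul_apply, ih, mulX_monomial]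
  rw [pbwMonomial, Module.End.mul_apply, Module.End.mul_apply, hy, hd, hx]

theorem linearIndependent_pbwMonomial (ω p q : R) :
    LinearIndependent R (pbwMonomial (mulX R) (mulD ω p) (mulY ω p q)) := by
  refine LinearIndependent.of_comp (LinearMap.applyₗ (monomial R 0 0 0)) ?_
  convert (Finsupp.basisSingleOne (R := R) (ι := ℕ × ℕ × ℕ)).linearIndependent using 1
  funext t
  simpa [monomial] using pbwMonomial_apply_monomial_zero t.1 t.2.1 t.2.2

end PBWModel

end

noncomputable section

namespace GCA

variable (k : Type*) [Field k]

theorem commute_gx_pow_three_gy : Commute (gx k ^ 3) (gy k) := by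
  simpa only [gx, gy, commute_iff_eq, map_mul, map_pow] using
    RingQuot.mkAlgHom_rel k (GCRel.rel1 (k := k))

theorem commute_gx_gy_pow_three : Commute (gx k) (gy k ^ 3) := by
  simpa only [gx, gy, commute_iff_eq, map_mul, map_pow] using
    RingQuot.mkAlgHom_rel k (GCRel.rel2 (k := k))

theorem gx_sq_mul_gy_sq_add :
    gx k ^ 2 * gy k ^ 2 + (gx k * gy k) ^ 2 = gy k ^ 2 * gx k ^ 2 + (gy k * gx k) ^ 2 := by
  simpa only [gx, gy, map_mul, map_pow, map_add] using RingQuot.mkAlgHom_rel k (GCRel.rel3 (k := k))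

theorem adjoin_gx_gy : Algebra.adjoin k {gx k, gy k} = ⊤ := by
  have hrange : ({gx k, gy k} : Set (GCA k)) =
      RingQuot.mkAlgHom k (GCRel k) '' Set.range (FreeAlgebra.ι k) := by
    ext a
    simp [gx, gy, Fin.exists_fin_two, eq_comm]
  rw [hrange, Algebra.adjoin_image, FreeAlgebra.adjoin_range_ι, Algebra.map_top,
    AlgHom.range_eq_top]
  exact RingQuot.mkAlgHom_surjective k (GCRel k)

theorem gα_eq_cubicPolar : gα k = cubicPolar (gx k) (gy k) := rfl

theorem gβ_eq_cubicPolar : gβ k = cubicPolar (gy k) (gx k) := by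
  simp only [gβ, cubicPolar]
  abel

theorem gα_mem_center : gα k ∈ Subalgebra.center k (GCA k) :=
  mem_center_of_adjoin_pair_eq_top (adjoin_gx_gy k)
    (commute_cubicPolar_left_iff.2 (commute_gx_pow_three_gy k)).symm
    (commute_cubicPolar_right_iff.2 (gx_sq_mul_gy_sq_add k)).symm

theorem gβ_mem_center : gβ k ∈ Subalgebra.center k (GCA k) :=
  gβ_eq_cubicPolar k ▸ mem_center_of_adjoin_pair_eq_top (adjoin_gx_gy k)
    (commute_cubicPolar_right_iff.2 (gx_sq_mul_gy_sq_add k).symm).symm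
    (commute_cubicPolar_left_iff.2 (commute_gx_gy_pow_three k).symm).symm

/-- The ring `k[α, β]`, over which the Clifford algebra satisfies straightening relations. -/
abbrev CoeffRing : Type _ := MvPolynomial (Fin 2) k

/-- The structure map of the Clifford algebra over `k[α, β]`, with values in the center. -/
def coeffToCenter : CoeffRing k →ₐ[k] Subalgebra.center k (GCA k) :=
  MvPolynomial.aeval ![⟨gα k, gα_mem_center k⟩, ⟨gβ k, gβ_mem_center k⟩]

instance : Algebra (CoeffRing k) (GCA k) :=
  ((Subalgebra.center k (GCA k)).val.comp (coeffToCenter k)).toRingHom.toAlgebra' fun r a =>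
    (Subalgebra.mem_center_iff.1 (coeffToCenter k r).2 a).symm

theorem algebraMap_coeffRing (r : CoeffRing k) :
    algebraMap (CoeffRing k) (GCA k) r = coeffToCenter k r := rfl

instance : IsScalarTower k (CoeffRing k) (GCA k) :=
  IsScalarTower.of_algebraMap_eq fun r => by
    rw [algebraMap_coeffRing, AlgHom.commutes]
    rfl

theorem algebraMap_X_zero :
    algebraMap (CoeffRing k) (GCA k) (MvPolynomial.X 0) = gα k := by
  simp [algebraMap_coeffRing, coeffToCenter]

theorem algebraMap_X_one :
    algebraMap (CoeffRing k) (GCA k) (MvPolynomial.X 1) = gβ k := by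
  simp [algebraMap_coeffRing, coeffToCenter]

theorem adjoin_coeffRing_gx_gy : Algebra.adjoin (CoeffRing k) {gx k, gy k} = ⊤ := by
  rw [← Algebra.adjoin_adjoin_of_tower k, adjoin_gx_gy, Algebra.coe_top, Algebra.adjoin_univ]

variable {k} in
/-- The universal property of the Clifford algebra. -/
def lift {A : Type*} [Ring A] [Algebra k A] {a b : A} (h1 : Commute (a ^ 3) b)
    (h2 : Commute a (b ^ 3))
    (h3 : a ^ 2 * b ^ 2 + (a * b) ^ 2 = b ^ 2 * a ^ 2 + (b * a) ^ 2) : GCA k →ₐ[k] A :=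
  RingQuot.liftAlgHom k ⟨FreeAlgebra.lift k ![a, b], by
    rintro _ _ (_ | _ | _)
    · simpa using h1.eq
    · simpa using h2.eq
    · simpa using h3⟩

theorem lift_gx {A : Type*} [Ring A] [Algebra k A] {a b : A} (h1 : Commute (a ^ 3) b)
    (h2 : Commute a (b ^ 3))
    (h3 : a ^ 2 * b ^ 2 + (a * b) ^ 2 = b ^ 2 * a ^ 2 + (b * a) ^ 2) :
    lift h1 h2 h3 (gx k) = a := by
  simp [lift, gx, RingQuot.liftAlgHom_mkAlgHom_apply]

theorem lift_gy {A : Type*} [Ring A] [Algebra k A] {a b : A} (h1 : Commute (a ^ 3) b)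
    (h2 : Commute a (b ^ 3))
    (h3 : a ^ 2 * b ^ 2 + (a * b) ^ 2 = b ^ 2 * a ^ 2 + (b * a) ^ 2) :
    lift h1 h2 h3 (gy k) = b := by
  simp [lift, gy, RingQuot.liftAlgHom_mkAlgHom_apply]

variable {k} {ω : k}

theorem algebraMap_cyclotomic (hω : ω ^ 2 + ω + 1 = 0) :
    algebraMap k (CoeffRing k) ω ^ 2 + algebraMap k (CoeffRing k) ω + 1 = 0 := by
  simpa only [map_add, map_pow, map_one, map_zero] using congrArg (algebraMap k (CoeffRing k)) hω

theorem isPBWTriple (hω : ω ^ 2 + ω + 1 = 0) :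
    IsPBWTriple (algebraMap k (CoeffRing k) ω) (MvPolynomial.X 0) (MvPolynomial.X 1)
      (gx k) (gδ k ω) (gy k) := by
  convert IsPBWTriple.of_cubicPolar (algebraMap_cyclotomic hω) (algebraMap_X_zero k).symm
    ((gβ_eq_cubicPolar k).symm.trans (algebraMap_X_one k).symm) using 1
  rw [gδ, algebraMap_smul, Algebra.smul_def]

/-- The universal property of the Clifford algebra over `k[α, β]`: any triple with the
straightening relations of `x, δ, y` is the image of that one. -/
def liftOfTriple (hω : ω ^ 2 + ω + 1 = 0) {A : Type*} [Ring A] [Algebra k A]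
    [Algebra (CoeffRing k) A] [IsScalarTower k (CoeffRing k) A] {x d y : A}
    (h : IsPBWTriple (algebraMap k (CoeffRing k) ω) (MvPolynomial.X 0) (MvPolynomial.X 1) x d y) :
    GCA k →ₐ[CoeffRing k] A :=
  have hω' := algebraMap_cyclotomic hω
  let f := lift (h.commute_x_pow_three_y hω') (h.commute_x_y_pow_three hω') (h.sq_mul_sq_add hω')
  have hx : f (gx k) = x := lift_gx ..
  have hy : f (gy k) = y := lift_gy ..
  { f with
    commutes' := by
      have hext : f.comp (IsScalarTower.toAlgHom k (CoeffRing k) (GCA k)) =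
          IsScalarTower.toAlgHom k (CoeffRing k) A := by
        refine MvPolynomial.algHom_ext fun i => ?_
        fin_cases i
        · simp [algebraMap_X_zero, gα_eq_cubicPolar, cubicPolar, hx, hy, ← h.cubicPolar_x_y hω']
        · simp [algebraMap_X_one, gβ_eq_cubicPolar, cubicPolar, hx, hy, ← h.cubicPolar_y_x hω']
      exact AlgHom.congr_fun hext }

theorem linearIndependent_pbwMonomial (hω : ω ^ 2 + ω + 1 = 0) :
    LinearIndependent (CoeffRing k) (pbwMonomial (gx k) (gδ k ω) (gy k)) := by
  have hmodel := PBWModel.isPBWTriple (p := MvPolynomial.X 0) (q := MvPolynomial.X 1)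
    (algebraMap_cyclotomic hω)
  exact (isPBWTriple hω).linearIndependent_of_map hmodel (liftOfTriple hω hmodel)
    (lift_gx ..) (lift_gy ..) (PBWModel.linearIndependent_pbwMonomial _ _ _)

theorem center_coeffRing_eq (hω : ω ^ 2 + ω + 1 = 0) (h3 : (3 : k) ≠ 0) :
    Subalgebra.center (CoeffRing k) (GCA k) =
      Algebra.adjoin (CoeffRing k) {gx k ^ 3, gy k ^ 3, gδ k ω ^ 3, gγ k} := by
  have h3' : IsUnit (3 : CoeffRing k) := by
    simpa only [map_ofNat] using (IsUnit.mk0 _ h3).map (algebraMap k (CoeffRing k))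
  exact (isPBWTriple hω).center_eq_centralSubalgebra (algebraMap_cyclotomic hω) h3'
    (adjoin_coeffRing_gx_gy k) (linearIndependent_pbwMonomial hω)

theorem algebraMap_image_range_X :
    algebraMap (CoeffRing k) (GCA k) '' Set.range MvPolynomial.X = {gα k, gβ k} := by
  ext a
  simp [Fin.exists_fin_two, algebraMap_X_zero, algebraMap_X_one, eq_comm]

end GCA

end

theorem stmt6_general (k : Type*) [Field k] (ω : k) (hω : IsPrimitiveRoot ω 3) :
    Subalgebra.center k (GCA k) =
      Algebra.adjoin k
        ({gx k ^ 3, gy k ^ 3, gα k, gβ k, gγ k, gδ k ω ^ 3} : Set (GCA k)) := by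
  have hcyc : ω ^ 2 + ω + 1 = 0 := by
    have hsum := hω.geom_sum_eq_zero (by norm_num)
    simp only [Finset.sum_range_succ, Finset.sum_range_zero] at hsum
    linear_combination hsum
  have h3 : (3 : k) ≠ 0 := by simpa using (hω.neZero' (n := 3)).out
  rw [← restrictScalars_center k (GCA.CoeffRing k), GCA.center_coeffRing_eq hcyc h3,
    restrictScalars_adjoin_of_adjoin_eq_top MvPolynomial.adjoin_range_X,
    GCA.algebraMap_image_range_X]
  congr 1
  ext a
  simp only [Set.mem_union, Set.mem_insert_iff, Set.mem_singleton_iff]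
  tauto

theorem stmt6 (k : Type*) [Field k] (h2 : (2 : k) ≠ 0) (h3 : (3 : k) ≠ 0)
    (ω : k) (hω : IsPrimitiveRoot ω 3) :
    Subalgebra.center k (GCA k) =
      Algebra.adjoin k
        ({gx k ^ 3, gy k ^ 3, gα k, gβ k, gγ k, gδ k ω ^ 3} : Set (GCA k)) :=
  stmt6_general k ω hω
end
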